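/- Assume a₂(x₁,x₂) ≤ a₁(x₁,x₂) for a.e. (x₁,x₂) ∈ ℝ^d × ℝ^d. Then for every n ≥ 2, the operator L₀^(n) is dissipative on the symmetric functions: for every κ > 0 and every G ∈ X_n invariant (a.e.) under permutations of its n coordinates, ‖L₀^(n)G − κG‖_{X_n} ≥ κ‖G‖_{X_n}. -/

import Mathlib

open MeasureTheory

noncomputable section

/-- `ℝ^d` -/
abbrev Rd (d : ℕ) : Type := Fin d → ℝ

/-- The diagonal part `L₀⁽ⁿ⁾` of the binary-jump generator, acting on functions on `(ℝ^d)ⁿ`. -/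
def L0n (d n : ℕ) (c : Rd d → Rd d → Rd d → Rd d → ℝ)
    (G : (Fin n → Rd d) → ℝ) (x : Fin n → Rd d) : ℝ :=
  ∑ i : Fin n, ∑ j : Fin n, if i < j then
    ∫ y : Rd d × Rd d, c (x i) (x j) y.1 y.2 *
      (G (Function.update (Function.update x i y.1) j y.2) - G x)
  else 0

/-- exchange coordinates `i,j` of the configuration with the auxiliary pair -/
def swapPair {d n : ℕ} (i j : Fin n) (z : (Fin n → Rd d) × (Rd d × Rd d)) :
    (Fin n → Rd d) × (Rd d × Rd d) :=
  (Function.update (Function.update z.1 i z.2.1) j z.2.2, (z.1 i, z.1 j))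

/-- flattening of a configuration and a pair -/
def flatE (d n : ℕ) : ((Fin n ⊕ Fin 2) → Rd d) ≃ᵐ (Fin n → Rd d) × (Rd d × Rd d) :=
  (MeasurableEquiv.sumPiEquivProdPi (fun _ : Fin n ⊕ Fin 2 => Rd d)).trans
    ((MeasurableEquiv.refl _).prodCongr MeasurableEquiv.finTwoArrow)

theorem flatE_mp (d n : ℕ) : MeasurePreserving (flatE d n) := by
  have h1 := volume_measurePreserving_sumPiEquivProdPi (fun _ : Fin n ⊕ Fin 2 => Rd d)
  have h2 := (MeasurePreserving.id (volume : Measure (Fin n → Rd d))).prod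
    (volume_preserving_finTwoArrow (Rd d))
  exact h2.comp h1

theorem swapPair_mp {d n : ℕ} {i j : Fin n} (hij : i ≠ j) :
    MeasurePreserving (swapPair (d := d) i j) := by
  have h0 := flatE_mp d n
  let p : Equiv.Perm (Fin n ⊕ Fin 2) :=
    Equiv.swap (Sum.inl i) (Sum.inr 0) * Equiv.swap (Sum.inl j) (Sum.inr 1)
  have hp := volume_measurePreserving_piCongrLeft (fun _ : Fin n ⊕ Fin 2 => Rd d) p
  have h := h0.comp (hp.comp h0.symm)
  convert h using 1
  funext z
  obtain ⟨x, y⟩ := z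
  have key : ∀ f : (Fin n ⊕ Fin 2) → Rd d, ∀ a,
      (MeasurableEquiv.piCongrLeft (fun _ : Fin n ⊕ Fin 2 => Rd d) p) f a = f (p.symm a) := by
    intro f a
    obtain ⟨b, rfl⟩ := p.surjective a
    rw [Equiv.symm_apply_apply]
    exact Equiv.piCongrLeft_apply_apply (fun _ : Fin n ⊕ Fin 2 => Rd d) p f b
  obtain ⟨f, hf⟩ := (flatE d n).surjective (x, y)
  have e1 : ∀ g, flatE d n g = (fun k => g (Sum.inl k), (g (Sum.inr 0), g (Sum.inr 1))) :=
    fun g => rfl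
  simp only [Function.comp_apply]
  rw [← hf, MeasurableEquiv.symm_apply_apply, e1, e1]
  simp only [key]
  have ps : p.symm =
    Equiv.swap (Sum.inl j) (Sum.inr 1) * Equiv.swap (Sum.inl i) (Sum.inr 0) := by
    ext a; simp [p, Equiv.symm_apply_eq]
  rw [ps]
  simp only [swapPair, Equiv.Perm.mul_apply]
  refine Prod.ext ?_ (Prod.ext ?_ ?_)
  · funext k
    simp only [Function.update_apply, Equiv.swap_apply_def]
    by_cases h1 : k = j
    · subst h1; simp [hij.symm]
    · by_cases h2 : k = i
      · subst h2; simp [h1]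
      · simp [h1, h2]
  · simp [Equiv.swap_apply_def, hij]
  · simp [Equiv.swap_apply_def]

theorem ae_pair {d n : ℕ} {i j : Fin n} (hij : i ≠ j) {P : Rd d × Rd d → Prop}
    (h : ∀ᵐ z, P z) : ∀ᵐ x : Fin n → Rd d, P (x i, x j) := by
  have h1 : ∀ᵐ z : (Fin n → Rd d) × (Rd d × Rd d), P z.2 :=
    Measure.quasiMeasurePreserving_snd.ae h
  have h2 : ∀ᵐ z : (Fin n → Rd d) × (Rd d × Rd d), P (z.1 i, z.1 j) :=
    (swapPair_mp hij).quasiMeasurePreserving.ae h1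
  have h3 := Measure.ae_ae_of_ae_prod h2
  filter_upwards [h3] with x hx
  exact Filter.eventually_const.mp hx

theorem int_lemma {d n : ℕ} {i j : Fin n} (hij : i ≠ j)
    (k : Rd d × Rd d → Rd d × Rd d → ℝ) (hk : Measurable (Function.uncurry k))
    (hk0 : ∀ x y, 0 ≤ k x y) (C : ℝ)
    (hint : ∀ᵐ x, Integrable (k x)) (hC : ∀ᵐ x, ∫ y, k x y ≤ C)
    (G : (Fin n → Rd d) → ℝ) (hG : Integrable G) :
    Integrable (fun z : (Fin n → Rd d) × (Rd d × Rd d) => k (z.1 i, z.1 j) z.2 * G z.1) := by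
  have hm : Measurable (fun z : (Fin n → Rd d) × (Rd d × Rd d) => k (z.1 i, z.1 j) z.2) :=
    hk.comp (by fun_prop : Measurable
      (fun z : (Fin n → Rd d) × (Rd d × Rd d) => ((z.1 i, z.1 j), z.2)))
  have hsm : AEStronglyMeasurable
      (fun z : (Fin n → Rd d) × (Rd d × Rd d) => k (z.1 i, z.1 j) z.2 * G z.1)
      (volume.prod volume) :=
    hm.aestronglyMeasurable.mul hG.1.comp_fst
  refine (integrable_prod_iff hsm).2 ⟨?_, ?_⟩
  · filter_upwards [ae_pair hij hint] with x hx
    exact hx.mul_const _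
  · refine Integrable.mono' (hG.norm.const_mul C) hsm.norm.integral_prod_right' ?_
    filter_upwards [ae_pair hij hC] with x hx
    simp only [norm_mul, integral_mul_const, norm_norm, Real.norm_of_nonneg (hk0 _ _)]
    rw [Real.norm_of_nonneg (integral_nonneg (hk0 _))]
    gcongr

theorem pair_lemma {d n : ℕ} {i j : Fin n} (hij : i ≠ j)
    (c : Rd d → Rd d → Rd d → Rd d → ℝ)
    (hc_meas : Measurable fun p : (Rd d × Rd d) × Rd d × Rd d => c p.1.1 p.1.2 p.2.1 p.2.2)
    (hc_nonneg : ∀ x₁ x₂ y₁ y₂, 0 ≤ c x₁ x₂ y₁ y₂)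
    (c₁ c₂ : ℝ)
    (hc₁int : ∀ᵐ x : Rd d × Rd d, Integrable fun y : Rd d × Rd d => c x.1 x.2 y.1 y.2)
    (hc₁ : ∀ᵐ x : Rd d × Rd d, (∫ y : Rd d × Rd d, c x.1 x.2 y.1 y.2) ≤ c₁)
    (hc₂int : ∀ᵐ x : Rd d × Rd d, Integrable fun y : Rd d × Rd d => c y.1 y.2 x.1 x.2)
    (hc₂ : ∀ᵐ x : Rd d × Rd d, (∫ y : Rd d × Rd d, c y.1 y.2 x.1 x.2) ≤ c₂)
    (hdom : ∀ᵐ x : Rd d × Rd d,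
      (∫ y : Rd d × Rd d, c y.1 y.2 x.1 x.2) ≤ ∫ y : Rd d × Rd d, c x.1 x.2 y.1 y.2)
    (G : (Fin n → Rd d) → ℝ) (hG : Integrable G) :
    Integrable (fun x => ∫ y : Rd d × Rd d, c (x i) (x j) y.1 y.2 *
      (G (Function.update (Function.update x i y.1) j y.2) - G x)) ∧
    ∃ B : (Fin n → Rd d) → ℝ, Integrable B ∧ ∫ x, B x ≤ 0 ∧
      ∀ᵐ x, ∀ s : ℝ, |s| ≤ 1 → s * G x = |G x| →
        s * (∫ y : Rd d × Rd d, c (x i) (x j) y.1 y.2 *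
          (G (Function.update (Function.update x i y.1) j y.2) - G x)) ≤ B x := by
  -- both integrability facts, for any integrable function
  have A1 : ∀ F : (Fin n → Rd d) → ℝ, Integrable F → Integrable
      (fun z : (Fin n → Rd d) × (Rd d × Rd d) => c (z.1 i) (z.1 j) z.2.1 z.2.2 * F z.1) :=
    fun F hF => int_lemma hij (fun x y => c x.1 x.2 y.1 y.2) hc_meas
      (fun _ _ => hc_nonneg _ _ _ _) c₁ hc₁int hc₁ F hF
  have A2 : ∀ F : (Fin n → Rd d) → ℝ, Integrable F → Integrable
      (fun z : (Fin n → Rd d) × (Rd d × Rd d) => c z.2.1 z.2.2 (z.1 i) (z.1 j) * F z.1) :=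
    fun F hF => int_lemma hij (fun x y => c y.1 y.2 x.1 x.2)
      (hc_meas.comp measurable_swap)
      (fun _ _ => hc_nonneg _ _ _ _) c₂ hc₂int hc₂ F hF
  have hid : ∀ F : (Fin n → Rd d) → ℝ,
      (fun z : (Fin n → Rd d) × (Rd d × Rd d) => c (z.1 i) (z.1 j) z.2.1 z.2.2 *
        F (Function.update (Function.update z.1 i z.2.1) j z.2.2)) =
      (fun z : (Fin n → Rd d) × (Rd d × Rd d) => c z.2.1 z.2.2 (z.1 i) (z.1 j) * F z.1)
        ∘ swapPair i j := by
    intro F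
    funext z
    simp [swapPair, Function.update_apply, hij]
  have A3 : ∀ F : (Fin n → Rd d) → ℝ, Integrable F → Integrable
      (fun z : (Fin n → Rd d) × (Rd d × Rd d) => c (z.1 i) (z.1 j) z.2.1 z.2.2 *
        F (Function.update (Function.update z.1 i z.2.1) j z.2.2)) := by
    intro F hF
    rw [hid]
    exact (swapPair_mp hij).integrable_comp_of_integrable (A2 F hF)
  have hinv : ∀ z : (Fin n → Rd d) × (Rd d × Rd d), swapPair i j (swapPair i j z) = z := by
    rintro ⟨x, y⟩
    simp only [swapPair]
    refine Prod.ext ?_ (Prod.ext ?_ ?_)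
    · funext k
      simp only [Function.update_apply]
      by_cases h1 : k = j
      · subst h1; simp
      · by_cases h2 : k = i
        · subst h2; simp [h1]
        · simp [h1, h2]
    · simp [Function.update_apply, hij]
    · simp
  have A4 : ∀ F : (Fin n → Rd d) → ℝ,
      ∫ z : (Fin n → Rd d) × (Rd d × Rd d), c (z.1 i) (z.1 j) z.2.1 z.2.2 *
        F (Function.update (Function.update z.1 i z.2.1) j z.2.2) =
      ∫ z : (Fin n → Rd d) × (Rd d × Rd d), c z.2.1 z.2.2 (z.1 i) (z.1 j) * F z.1 := by
    intro F
    rw [hid]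
    have hmp := swapPair_mp (d := d) hij
    let e : ((Fin n → Rd d) × (Rd d × Rd d)) ≃ᵐ ((Fin n → Rd d) × (Rd d × Rd d)) :=
      { toFun := swapPair i j, invFun := swapPair i j, left_inv := hinv, right_inv := hinv,
        measurable_toFun := hmp.measurable, measurable_invFun := hmp.measurable }
    have he : MeasurableEmbedding (swapPair (d := d) i j) := e.measurableEmbedding
    exact hmp.integral_comp he
      (fun z : (Fin n → Rd d) × (Rd d × Rd d) => c z.2.1 z.2.2 (z.1 i) (z.1 j) * F z.1)
  have hH := (A3 G hG).sub (A1 G hG)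
  have hK := (A3 _ hG.abs).sub (A1 _ hG.abs)
  refine ⟨?_, fun x => ∫ y : Rd d × Rd d, (c (x i) (x j) y.1 y.2 *
      |G (Function.update (Function.update x i y.1) j y.2)| - c (x i) (x j) y.1 y.2 * |G x|),
      hK.integral_prod_left, ?_, ?_⟩
  · simp only [mul_sub]
    exact hH.integral_prod_left
  · have e1 := integral_prod _ hK
    simp only [Pi.sub_apply] at e1
    rw [← e1]
    have e2 := integral_sub (A3 _ hG.abs) (A1 _ hG.abs)
    have e3 := A4 (fun x => |G x|)
    have e4 := integral_prod _ (A2 _ hG.abs)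
    have e5 := integral_prod _ (A1 _ hG.abs)
    have e6 : ∫ x : Fin n → Rd d, ∫ y : Rd d × Rd d, c y.1 y.2 (x i) (x j) * |G x| ≤
        ∫ x : Fin n → Rd d, ∫ y : Rd d × Rd d, c (x i) (x j) y.1 y.2 * |G x| := by
      refine integral_mono_ae (A2 _ hG.abs).integral_prod_left
        (A1 _ hG.abs).integral_prod_left ?_
      filter_upwards [ae_pair hij hdom] with x hx
      simp only [integral_mul_const]
      exact mul_le_mul_of_nonneg_right hx (abs_nonneg _)
    refine e2.le.trans ?_
    rw [sub_nonpos]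
    refine e3.le.trans (e4.le.trans (e6.trans e5.ge))
  · have h1 := hH.prod_right_ae
    have h2 := hK.prod_right_ae
    filter_upwards [h1, h2] with x hx1 hx2 s hs hsG
    rw [← integral_const_mul]
    simp only [mul_sub]
    refine integral_mono (by simpa only [mul_sub, Pi.sub_apply] using hx1.const_mul s) hx2 ?_
    intro y
    simp only [Pi.sub_apply]
    have hc := hc_nonneg (x i) (x j) y.1 y.2
    set u := G (Function.update (Function.update x i y.1) j y.2)
    have hu : s * u ≤ |u| := by
      calc s * u ≤ |s * u| := le_abs_self _
        _ = |s| * |u| := abs_mul _ _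
        _ ≤ 1 * |u| := by gcongr
        _ = |u| := one_mul _
    rw [← hsG]
    nlinarith [mul_le_mul_of_nonneg_left hu hc]

/-- If `a₂(x₁,x₂) ≤ a₁(x₁,x₂)` a.e., then for every `n ≥ 2` the operator
`L₀⁽ⁿ⁾` is dissipative on symmetric functions: for every `κ > 0` and every symmetric
`G ∈ X_n = L¹((ℝ^d)ⁿ)`, `‖L₀⁽ⁿ⁾G − κG‖_{X_n} ≥ κ‖G‖_{X_n}`. -/
theorem statement1
    (d : ℕ) (hd : 1 ≤ d)
    (c : Rd d → Rd d → Rd d → Rd d → ℝ)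
    (hc_meas : Measurable fun p : (Rd d × Rd d) × Rd d × Rd d => c p.1.1 p.1.2 p.2.1 p.2.2)
    (hc_nonneg : ∀ x₁ x₂ y₁ y₂, 0 ≤ c x₁ x₂ y₁ y₂)
    (c₁ c₂ : ℝ)
    (hc₁int : ∀ᵐ x : Rd d × Rd d, Integrable fun y : Rd d × Rd d => c x.1 x.2 y.1 y.2)
    (hc₁ : ∀ᵐ x : Rd d × Rd d, (∫ y : Rd d × Rd d, c x.1 x.2 y.1 y.2) ≤ c₁)
    (hc₂int : ∀ᵐ x : Rd d × Rd d, Integrable fun y : Rd d × Rd d => c y.1 y.2 x.1 x.2)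
    (hc₂ : ∀ᵐ x : Rd d × Rd d, (∫ y : Rd d × Rd d, c y.1 y.2 x.1 x.2) ≤ c₂)
    -- a.e. domination `a₂ ≤ a₁`
    (hdom : ∀ᵐ x : Rd d × Rd d,
      (∫ y : Rd d × Rd d, c y.1 y.2 x.1 x.2) ≤ ∫ y : Rd d × Rd d, c x.1 x.2 y.1 y.2)
    (n : ℕ) (hn : 2 ≤ n)
    (G : (Fin n → Rd d) → ℝ) (hG : Integrable G)
    -- `G` is (a.e.) invariant under permutations of its `n` coordinates
    (hGsym : ∀ σ : Equiv.Perm (Fin n), ∀ᵐ x : Fin n → Rd d, G (x ∘ σ) = G x)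
    (κ : ℝ) (hκ : 0 < κ) :
    κ * ∫ x : Fin n → Rd d, |G x| ≤
      ∫ x : Fin n → Rd d, |L0n d n c G x - κ * G x| := by
  have hp : ∀ i j : Fin n, ∃ B : (Fin n → Rd d) → ℝ,
      Integrable (fun x => if i < j then ∫ y : Rd d × Rd d, c (x i) (x j) y.1 y.2 *
        (G (Function.update (Function.update x i y.1) j y.2) - G x) else 0) ∧
      Integrable B ∧ ∫ x, B x ≤ 0 ∧
      ∀ᵐ x, ∀ s : ℝ, |s| ≤ 1 → s * G x = |G x| →
        s * (if i < j then ∫ y : Rd d × Rd d, c (x i) (x j) y.1 y.2 *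
          (G (Function.update (Function.update x i y.1) j y.2) - G x) else 0) ≤ B x := by
    intro i j
    by_cases h : i < j
    · obtain ⟨h1, B, h2⟩ := pair_lemma h.ne c hc_meas hc_nonneg c₁ c₂ hc₁int hc₁ hc₂int hc₂
        hdom G hG
      simp only [h, if_true]
      exact ⟨B, h1, h2⟩
    · simp only [h, if_false]
      exact ⟨fun _ => 0, integrable_zero _ _ _, integrable_zero _ _ _, by simp, by simp⟩
  choose B hD hB hB0 hle using hp
  have hL : Integrable (L0n d n c G) := by
    unfold L0n
    exact integrable_finsetSum _ fun i _ => integrable_finsetSum _ fun j _ => hD i j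
  have hBs : Integrable (fun x => ∑ i, ∑ j, B i j x) :=
    integrable_finsetSum _ fun i _ => integrable_finsetSum _ fun j _ => hB i j
  have hBs0 : ∫ x, ∑ i, ∑ j, B i j x ≤ 0 := by
    rw [integral_finsetSum _ fun i _ => integrable_finsetSum _ fun j _ => hB i j]
    refine Finset.sum_nonpos fun i _ => ?_
    rw [integral_finsetSum _ fun j _ => hB i j]
    exact Finset.sum_nonpos fun j _ => hB0 i j
  have hall : ∀ᵐ x, ∀ i j, ∀ s : ℝ, |s| ≤ 1 → s * G x = |G x| →
        s * (if i < j then ∫ y : Rd d × Rd d, c (x i) (x j) y.1 y.2 *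
          (G (Function.update (Function.update x i y.1) j y.2) - G x) else 0) ≤ B i j x :=
    ae_all_iff.2 fun i => ae_all_iff.2 fun j => hle i j
  have main : ∫ x, (κ * |G x| - ∑ i, ∑ j, B i j x) ≤ ∫ x, |L0n d n c G x - κ * G x| := by
    refine integral_mono_ae ((hG.abs.const_mul κ).sub hBs) (hL.sub (hG.const_mul κ)).abs ?_
    filter_upwards [hall] with x hx
    obtain ⟨s, hs, hsG⟩ : ∃ s : ℝ, |s| ≤ 1 ∧ s * G x = |G x| := by
      rcases le_total 0 (G x) with h | h
      · exact ⟨1, by simp, by rw [abs_of_nonneg h, one_mul]⟩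
      · exact ⟨-1, by simp, by rw [abs_of_nonpos h]; ring⟩
    have hsL : s * L0n d n c G x ≤ ∑ i, ∑ j, B i j x := by
      unfold L0n
      simp only [Finset.mul_sum]
      exact Finset.sum_le_sum fun i _ => Finset.sum_le_sum fun j _ => hx i j s hs hsG
    have h1 : -(s * (L0n d n c G x - κ * G x)) ≤ |L0n d n c G x - κ * G x| := by
      calc -(s * (L0n d n c G x - κ * G x)) ≤ |s * (L0n d n c G x - κ * G x)| := neg_le_abs _
        _ = |s| * |L0n d n c G x - κ * G x| := abs_mul _ _
        _ ≤ 1 * |L0n d n c G x - κ * G x| := by gcongr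
        _ = _ := one_mul _
    have h2 : κ * |G x| = κ * (s * G x) := by rw [hsG]
    nlinarith
  rw [integral_sub (hG.abs.const_mul κ) hBs, integral_const_mul] at main
  linarith
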